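/- Let E, F be finite sets of variables, x ∈ E, y ∈ F, and S, K ∈ ℕ. Then A(E, x, S) ≤_T A(F, y, K) if and only if F ⊆ E, x = y, and S ≤ K. -/

import Mathlib

/-- The impredicative maximum on natural numbers. -/
def imaxN : ℕ → ℕ → ℕ
  | _, 0 => 0
  | i, (j+1) => max i (j+1)

/-- Sublevels A(E,x,S) and B(E,S). -/
inductive SubLvl where
  | A : Finset ℕ → ℕ → ℕ → SubLvl
  | B : Finset ℕ → ℕ → SubLvl
deriving DecidableEq

/-- Value of a sublevel under a valuation. -/
def evalS (σ : ℕ → ℕ) : SubLvl → ℕ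
  | .A E x S => if ∃ y ∈ E, σ y = 0 then 0 else σ x + S
  | .B E S => if ∃ y ∈ E, σ y = 0 then 0 else S

/-- Wellformed sublevels. -/
def Wf : SubLvl → Prop
  | .A E x _ => x ∈ E
  | .B _ S => 0 < S

/-- Semantic comparison of sublevels. -/
def leT (u v : SubLvl) : Prop := ∀ σ : ℕ → ℕ, evalS σ u ≤ evalS σ v

/-!
`A(E, x, S)` vanishes exactly when some variable of a finite set `V(E, x, S)` does, and equals
`σ x + S` otherwise; here `V(E, x, S) = E`, except that `x` joins it when `S = 0`. Comparing the two
sides at the valuation that is `0` at one variable and `1` elsewhere gives the inclusion of the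
vanishing sets. At nowhere zero valuations the comparison reads `σ x + S ≤ σ y + K`: taking `σ`
large at `x` only forces `x = y`, and `σ = 1` then gives `S ≤ K`.
-/

/-- The set `V(E, x, S)` of variables whose vanishing makes the sublevel `A(E, x, S)` vanish. It can
be larger than `E`: when `S = 0`, the value `σ x + S` itself vanishes with `σ x`. -/
def vanishingVars (E : Finset ℕ) (x S : ℕ) : Finset ℕ :=
  if S = 0 then insert x E else E

section

variable {E F : Finset ℕ} {x y S K : ℕ} {σ : ℕ → ℕ}

theorem vanishingVars_of_mem (hx : x ∈ E) : vanishingVars E x S = E := by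
  rw [vanishingVars, Finset.insert_eq_of_mem hx, ite_self]

theorem evalS_A_eq_zero_iff :
    evalS σ (.A E x S) = 0 ↔ ∃ z ∈ vanishingVars E x S, σ z = 0 := by
  by_cases hS : S = 0
  · simp only [evalS, vanishingVars, hS, if_true, Finset.exists_mem_insert, add_zero,
      ite_eq_left_iff]
    exact or_iff_not_imp_left.symm.trans or_comm
  · simp [evalS, vanishingVars, hS]

theorem evalS_A_of_forall_ne_zero (hσ : ∀ z ∈ E, σ z ≠ 0) : evalS σ (.A E x S) = σ x + S :=
  if_neg fun ⟨z, hz, hz0⟩ => hσ z hz hz0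

theorem evalS_A_of_ne_zero (h : evalS σ (.A E x S) ≠ 0) : evalS σ (.A E x S) = σ x + S :=
  evalS_A_of_forall_ne_zero fun z hz hz0 => h (if_pos ⟨z, hz, hz0⟩)

theorem evalS_A_le : evalS σ (.A E x S) ≤ σ x + S := by
  by_cases h : evalS σ (.A E x S) = 0
  · exact h.le.trans (Nat.zero_le _)
  · exact (evalS_A_of_ne_zero h).le

theorem evalS_A_update_one_eq_zero_iff {z : ℕ} :
    evalS (Function.update 1 z 0) (.A E x S) = 0 ↔ z ∈ vanishingVars E x S := by
  simp [evalS_A_eq_zero_iff, Function.update_apply]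

theorem leT.vanishingVars_subset (h : leT (.A E x S) (.A F y K)) :
    vanishingVars F y K ⊆ vanishingVars E x S := fun _ hz =>
  evalS_A_update_one_eq_zero_iff.1 <|
    Nat.eq_zero_of_le_zero <| (h _).trans (evalS_A_update_one_eq_zero_iff.2 hz).le

theorem leT.add_le_add (h : leT (.A E x S) (.A F y K)) (hσ : ∀ z, σ z ≠ 0) :
    σ x + S ≤ σ y + K := by
  simpa only [evalS_A_of_forall_ne_zero fun z _ => hσ z] using h σ

theorem leT.var_eq (h : leT (.A E x S) (.A F y K)) : x = y := by
  by_contra hxy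
  have hσ : ∀ z, Function.update (1 : ℕ → ℕ) x (K + 2) z ≠ 0 := fun z => by
    rw [Function.update_apply]
    split_ifs <;> simp
  have hle : K + 2 + S ≤ 1 + K := by
    simpa [Function.update_of_ne (Ne.symm hxy)] using h.add_le_add hσ
  omega

theorem leT.shift_le (h : leT (.A E x S) (.A F y K)) : S ≤ K := by
  simpa using h.add_le_add (σ := 1) fun _ => one_ne_zero

theorem leT_A_of_vanishingVars_subset (hV : vanishingVars F x K ⊆ vanishingVars E x S)
    (hSK : S ≤ K) : leT (.A E x S) (.A F x K) := by
  intro σ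
  by_cases hF : evalS σ (.A F x K) = 0
  · obtain ⟨z, hz, hz0⟩ := evalS_A_eq_zero_iff.1 hF
    have hE : evalS σ (.A E x S) = 0 := evalS_A_eq_zero_iff.2 ⟨z, hV hz, hz0⟩
    rw [hE, hF]
  · calc
      evalS σ (.A E x S) ≤ σ x + S := evalS_A_le
      _ ≤ σ x + K := by gcongr
      _ = evalS σ (.A F x K) := (evalS_A_of_ne_zero hF).symm

end

theorem A_le_A_iff_general (E F : Finset ℕ) (x y S K : ℕ) :
    leT (SubLvl.A E x S) (SubLvl.A F y K) ↔
      vanishingVars F y K ⊆ vanishingVars E x S ∧ x = y ∧ S ≤ K := by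
  constructor
  · exact fun h => ⟨h.vanishingVars_subset, h.var_eq, h.shift_le⟩
  · rintro ⟨hV, rfl, hSK⟩
    exact leT_A_of_vanishingVars_subset hV hSK

theorem A_le_A_iff (E F : Finset ℕ) (x y : ℕ) (hx : x ∈ E) (hy : y ∈ F) (S K : ℕ) :
    leT (SubLvl.A E x S) (SubLvl.A F y K) ↔ F ⊆ E ∧ x = y ∧ S ≤ K := by
  rw [A_le_A_iff_general, vanishingVars_of_mem hx, vanishingVars_of_mem hy]
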